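/- Let (X,ρ) be a separable metric space, μ a blanketed Borel probability measure on X, q ∈ ℝ, and ξ ∈ Φ_D a blanketed premeasure. Then for every E ⊆ X, W^{q,ξ}_μ(E) = H^{q,ξ}_μ(E). -/

import Mathlib

open Metric MeasureTheory Set Filter TopologicalSpace
open scoped ENNReal NNReal Classical

noncomputable section

/-- `x ^ q` for extended nonnegative reals, with the paper's convention
`0 ^ q = ∞` for `q ≤ 0`. -/
def epow (x : ℝ≥0∞) (q : ℝ) : ℝ≥0∞ := if x = 0 ∧ q ≤ 0 then ∞ else x ^ q

variable {X X' : Type*}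

section Defs

variable [MetricSpace X] [MetricSpace X']

/-- A premeasure on a metric space: an increasing `[0,∞]`-valued function on the family of
closed balls, vanishing on the empty set. -/
def IsPremeasure (ξ : Set X → ℝ≥0∞) : Prop :=
  ξ ∅ = 0 ∧ ∀ (x : X) (r : ℝ) (x' : X) (r' : ℝ),
    closedBall x r ⊆ closedBall x' r' → ξ (closedBall x r) ≤ ξ (closedBall x' r')

/-- The doubling ("blanketed") condition defining the class `Φ_D` of premeasures:
`ξ(B(x,2r)) ≤ K ξ(B(x,r))` for some constant `K > 1`, all `x` and all `0 < r ≤ 1`. -/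
def PremeasureBlanketed (ξ : Set X → ℝ≥0∞) : Prop :=
  ∃ K : ℝ≥0, 1 < K ∧ ∀ (x : X) (r : ℝ), 0 < r → r ≤ 1 →
    ξ (closedBall x (2 * r)) ≤ (K : ℝ≥0∞) * ξ (closedBall x r)

variable [MeasurableSpace X] [MeasurableSpace X']

/-- The support of a Borel measure on a metric space. -/
def measSupport (μ : Measure X) : Set X := {x : X | ∀ r : ℝ, 0 < r → 0 < μ (ball x r)}

/-- A blanketed (doubling) measure: for some `a > 1`,
`limsup_{r → 0⁺} sup_{x ∈ supp μ} μ(B(x,ar)) / μ(B(x,r)) < ∞`. -/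
def MeasureBlanketed (μ : Measure X) : Prop :=
  ∃ a : ℝ, 1 < a ∧
    limsup (fun r : ℝ => ⨆ x ∈ measSupport μ,
      μ (closedBall x (a * r)) / μ (closedBall x r)) (nhdsWithin 0 (Ioi 0)) < ∞

/-- The quantity `μ(B)^q ξ(B)` attached to a ball `B`. -/
def ballWeight (μ : Measure X) (q : ℝ) (ξ : Set X → ℝ≥0∞) (B : Set X) : ℝ≥0∞ :=
  epow (μ B) q * ξ B

/-- A centered `δ`-cover of `E`: countably many closed balls centered in `E`, of diameters
at most `2δ`, covering `E`. -/
def IsCenteredCover (E : Set X) (δ : ℝ) (c : ℕ → X) (r : ℕ → ℝ) : Prop :=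
  (∀ i, c i ∈ E) ∧ (∀ i, diam (closedBall (c i) (r i)) ≤ 2 * δ) ∧
    E ⊆ ⋃ i, closedBall (c i) (r i)

/-- The pre-Hausdorff quantity `H^{q,ξ}_{μ,δ}(E)`. -/
def Hd (μ : Measure X) (q : ℝ) (ξ : Set X → ℝ≥0∞) (δ : ℝ) (E : Set X) : ℝ≥0∞ :=
  if E = ∅ then 0 else
    ⨅ (c : ℕ → X) (r : ℕ → ℝ) (_ : IsCenteredCover E δ c r),
      ∑' i, ballWeight μ q ξ (closedBall (c i) (r i))

/-- `H^{q,ξ}_{μ,0}(E) = sup_{δ > 0} H^{q,ξ}_{μ,δ}(E)`. -/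
def H0 (μ : Measure X) (q : ℝ) (ξ : Set X → ℝ≥0∞) (E : Set X) : ℝ≥0∞ :=
  ⨆ (δ : ℝ) (_ : 0 < δ), Hd μ q ξ δ E

/-- The generalized Hausdorff measure `H^{q,ξ}_μ(E) = sup_{F ⊆ E} H^{q,ξ}_{μ,0}(F)`. -/
def HM (μ : Measure X) (q : ℝ) (ξ : Set X → ℝ≥0∞) (E : Set X) : ℝ≥0∞ :=
  ⨆ (F : Set X) (_ : F ⊆ E), H0 μ q ξ F

/-- A weighted and centered `δ`-cover of `E`: countably many pairs `(w i, B i)` of nonnegative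
weights and closed balls centered in `E` of diameters at most `2δ`, with
`Σ {w i : x ∈ B i} ≥ 1` for every `x ∈ E`. -/
def IsWeightedCover (E : Set X) (δ : ℝ) (w : ℕ → ℝ≥0) (c : ℕ → X) (r : ℕ → ℝ) : Prop :=
  (∀ i, c i ∈ E) ∧ (∀ i, diam (closedBall (c i) (r i)) ≤ 2 * δ) ∧
    ∀ x ∈ E, 1 ≤ ∑' i, (if x ∈ closedBall (c i) (r i) then (w i : ℝ≥0∞) else 0)

/-- The pre-weighted-Hausdorff quantity `W^{q,ξ}_{μ,δ}(E)`. -/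
def Wd (μ : Measure X) (q : ℝ) (ξ : Set X → ℝ≥0∞) (δ : ℝ) (E : Set X) : ℝ≥0∞ :=
  if E = ∅ then 0 else
    ⨅ (w : ℕ → ℝ≥0) (c : ℕ → X) (r : ℕ → ℝ) (_ : IsWeightedCover E δ w c r),
      ∑' i, (w i : ℝ≥0∞) * ballWeight μ q ξ (closedBall (c i) (r i))

/-- `W^{q,ξ}_{μ,0}(E) = sup_{δ > 0} W^{q,ξ}_{μ,δ}(E)`. -/
def W0 (μ : Measure X) (q : ℝ) (ξ : Set X → ℝ≥0∞) (E : Set X) : ℝ≥0∞ :=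
  ⨆ (δ : ℝ) (_ : 0 < δ), Wd μ q ξ δ E

/-- The weighted generalized Hausdorff measure `W^{q,ξ}_μ(E) = sup_{F ⊆ E} W^{q,ξ}_{μ,0}(F)`. -/
def WM (μ : Measure X) (q : ℝ) (ξ : Set X → ℝ≥0∞) (E : Set X) : ℝ≥0∞ :=
  ⨆ (F : Set X) (_ : F ⊆ E), W0 μ q ξ F

/-- Hypothesis (H) for `(X, ξ, μ)`: for every `ε > 0`, `X` can be covered by countably many
closed balls of diameters `< ε` on which `μ(B)^q ξ(B)` is finite. -/
def HypH (μ : Measure X) (q : ℝ) (ξ : Set X → ℝ≥0∞) : Prop :=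
  ∀ ε : ℝ, 0 < ε → ∃ (c : ℕ → X) (r : ℕ → ℝ),
    (univ : Set X) ⊆ (⋃ i, closedBall (c i) (r i)) ∧
    (∀ i, diam (closedBall (c i) (r i)) < ε) ∧
    ∀ i, ballWeight μ q ξ (closedBall (c i) (r i)) < ∞

/-- The product premeasure `ξ₀(B × B') = ξ(B) ξ'(B')` on the product space (whose closed balls
are exactly the products `B(x,r) × B(x',r)`), with the convention `0 ⬝ ∞ = ∞ ⬝ 0 = 0`. -/
def prodPre (ξ : Set X → ℝ≥0∞) (ξ' : Set X' → ℝ≥0∞) : Set (X × X') → ℝ≥0∞ :=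
  fun S => ξ (Prod.fst '' S) * ξ' (Prod.snd '' S)

/-- Two sets are (positively) separated: `inf {ρ(x,y) : x ∈ E, y ∈ F} > 0`. -/
def SepSets (E F : Set X) : Prop := 0 < ⨅ x ∈ E, ⨅ y ∈ F, edist x y

/-- The upper `(q,ξ)`-density of `ν` at `x` with respect to `μ`:
`limsup_{r → 0⁺} ν(B(x,r)) / (μ(B(x,r))^q ξ(B(x,r)))`. -/
def upperDensity (μ : Measure X) (q : ℝ) (ξ : Set X → ℝ≥0∞) (x : X) (ν : Measure X) : ℝ≥0∞ :=
  limsup (fun r : ℝ => ν (closedBall x r) / ballWeight μ q ξ (closedBall x r))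
    (nhdsWithin 0 (Ioi 0))

/-- A Hausdorff function: right continuous, monotone increasing `h : [0,∞] → [0,∞]` with
`h(0) = 0` and `h(r) > 0` for `r > 0`. -/
def IsHausdorffFunction (h : ℝ≥0∞ → ℝ≥0∞) : Prop :=
  Monotone h ∧ h 0 = 0 ∧ (∀ r : ℝ≥0∞, 0 < r → 0 < h r) ∧
    ∀ r : ℝ≥0∞, ContinuousWithinAt h (Ici r) r

/-- The premeasure `ξ_h` induced by a Hausdorff function: `ξ_h(B) = h(diam B)` for `B ≠ ∅`,
`ξ_h(∅) = 0`. -/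
def hausPre (h : ℝ≥0∞ → ℝ≥0∞) : Set X → ℝ≥0∞ :=
  fun B => if B = ∅ then 0 else h (EMetric.diam B)

end Defs

/-!
Suppose first that ball weights are doubling at the points of `E`. A randomised greedy form of the
Vitali covering lemma extracts from a weighted cover an honest cover by enlarged balls at a bounded
multiplicative cost, so `HM E ≤ 2 * C * WM E`, and we may assume that `HM E` is finite. Let `ν` be
the finite Borel measure `s ↦ HM (s ∩ E)` and let `t > 1`. By the Vitali covering theorem, the
points of `E` around which `ν B > t * ballWeight B` for arbitrarily small balls `B` form a `ν`-null
set. At the remaining points `ν B ≤ t * ballWeight B` for all small `B`, and integrating a weighted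
cover against `ν` (Markov's inequality) bounds the measure of the set of these points by `t * WM E`.
Letting `t → 1` gives `HM E ≤ WM E`.

The doubling holds on all of `X` if `q ≤ 0`, and on the support of `μ` if `q > 0`. In the latter
case small balls around the points outside the support have weight zero, so those points contribute
nothing once `E` is known to be separable, which follows from `WM E < ∞`.
-/

section Selection

/-! ### Randomised greedy selection -/

lemma exists_subset_volume_eq {A : Set unitInterval} {c : ℝ≥0∞} (hA : MeasurableSet A)
    (hc : c ≤ volume A) : ∃ S ⊆ A, MeasurableSet S ∧ volume S = c := by
  let g : unitInterval → ℝ≥0∞ := fun s => volume (A ∩ Iic s)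
  have hg : Continuous g := by
    refine continuous_of_le_add_edist 1 ENNReal.one_ne_top fun x y => ?_
    have hxy : A ∩ Iic x ⊆ (A ∩ Iic y) ∪ uIoc y x := fun z ⟨hzA, hzx⟩ =>
      (le_or_gt z y).imp (⟨hzA, ·⟩) fun hyz => Ioc_subset_uIoc ⟨hyz, hzx⟩
    calc g x ≤ g y + volume (uIoc y x) := (measure_mono hxy).trans (measure_union_le _ _)
      _ = g y + 1 * edist x y := by rw [unitInterval.volume_uIoc, one_mul]
  have hg0 : g 0 = 0 :=
    measure_mono_null (fun z hz => le_antisymm hz.2 bot_le) (measure_singleton (0 : unitInterval))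
  have hg1 : volume A ≤ g 1 := measure_mono fun z hz => ⟨hz, unitInterval.le_one'⟩
  obtain ⟨s, hs⟩ := mem_range_of_exists_le_of_exists_ge hg ⟨0, hg0.trans_le zero_le⟩
    ⟨1, hc.trans hg1⟩
  exact ⟨A ∩ Iic s, inter_subset_left, hA.inter measurableSet_Iic, hs⟩

lemma exists_subset_volume_le (c : ℝ≥0∞) (A : Set unitInterval) (hA : MeasurableSet A) :
    ∃ S ⊆ A, MeasurableSet S ∧ volume S ≤ c ∧ (volume S = c ∨ S = A) := by
  rcases le_total c (volume A) with h | h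
  · obtain ⟨S, hSA, hS, hSc⟩ := exists_subset_volume_eq hA h
    exact ⟨S, hSA, hS, hSc.le, .inl hSc⟩
  · exact ⟨A, subset_rfl, hA, h, .inr rfl⟩

lemma exists_greedy_fractional_coloring {ι : Type*} [LinearOrder ι] [WellFoundedLT ι]
    [Countable ι] (G : SimpleGraph ι) (c : ι → ℝ≥0∞) :
    ∃ T : ι → Set unitInterval, (∀ i, MeasurableSet (T i)) ∧ (∀ i, volume (T i) ≤ c i) ∧
      (∀ i j, G.Adj i j → Disjoint (T i) (T j)) ∧
      ∀ i, volume (T i) = c i ∨ ∀ t ∉ T i, ∃ j < i, G.Adj j i ∧ t ∈ T j := by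
  choose! pick pick_subset pick_meas pick_le pick_max using exists_subset_volume_le
  let T : ι → Set unitInterval := wellFounded_lt.fix fun i T' =>
    pick (c i) (⋃ (j) (h : j < i) (_ : G.Adj j i), T' j h)ᶜ
  let used : ι → Set unitInterval := fun i => ⋃ (j) (_ : j < i) (_ : G.Adj j i), T j
  have hT : ∀ i, T i = pick (c i) (used i)ᶜ := fun i => wellFounded_lt.fix_eq _ i
  have hTm : ∀ i, MeasurableSet (T i) := by
    intro i
    induction i using WellFoundedLT.induction with | ind i ih => ?_
    rw [hT]
    exact pick_meas _ _ (.compl <| .iUnion fun j => .iUnion fun h => .iUnion fun _ => ih j h)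
  have hused : ∀ i, MeasurableSet (used i)ᶜ := fun i =>
    .compl <| .iUnion fun j => .iUnion fun _ => .iUnion fun _ => hTm j
  have mem_used : ∀ {i t}, t ∈ used i ↔ ∃ j < i, G.Adj j i ∧ t ∈ T j := by
    simp only [used, mem_iUnion, exists_prop, implies_true]
  have disjoint_of_lt : ∀ {i j}, j < i → G.Adj j i → Disjoint (T i) (T j) := by
    refine fun {i j} hij hG => disjoint_left.2 fun t hti htj => ?_
    rw [hT i] at hti
    exact pick_subset _ _ (hused i) hti (mem_used.2 ⟨j, hij, hG, htj⟩)
  refine ⟨T, hTm, fun i => hT i ▸ pick_le _ _ (hused i), fun i j hG => ?_, fun i => ?_⟩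
  · rcases lt_or_gt_of_ne hG.ne with h | h
    · exact (disjoint_of_lt h hG).symm
    · exact disjoint_of_lt h hG.symm
  · refine (pick_max (c i) _ (hused i)).imp (hT i ▸ ·) fun h t ht => mem_used.1 ?_
    rwa [hT i, h, notMem_compl_iff] at ht

variable {ι α : Type*} [Countable ι]

/- Draw `t` uniformly and keep the sets `B i` with `t ∈ T i`: the expected total of `w` is at most
`∑ c i * w i`. The sets `T i` with `y ∈ B i` are disjoint, so they cannot all have measure `c i`
when these numbers add up to more than `1`. -/
lemma exists_weighted_vitali_subfamily_of_wellOrder [LinearOrder ι] [WellFoundedLT ι]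
    (B : ι → Set α) (c w : ι → ℝ≥0∞) :
    ∃ S : Set ι, ∑' i : S, w i ≤ ∑' i, c i * w i ∧
      ∀ y, 1 < ∑' i, (B i).indicator (fun _ => c i) y →
        ∃ i, y ∈ B i ∧ ∃ j ∈ S, (B i ∩ B j).Nonempty ∧ j ≤ i := by
  let G : SimpleGraph ι :=
    { Adj i j := i ≠ j ∧ (B i ∩ B j).Nonempty
      symm := ⟨fun i j h => ⟨h.1.symm, inter_comm (B i) (B j) ▸ h.2⟩⟩
      loopless := ⟨fun _ h => h.1 rfl⟩ }
  obtain ⟨T, hTm, hTc, hTdisj, hTmax⟩ := exists_greedy_fractional_coloring G c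
  have hm : ∀ i, Measurable ((T i).indicator fun _ => w i) := fun i =>
    measurable_const.indicator (hTm i)
  obtain ⟨t, ht⟩ := exists_le_lintegral (μ := (volume : Measure unitInterval))
    (f := fun t => ∑' i, (T i).indicator (fun _ => w i) t) (Measurable.tsum hm).aemeasurable
  refine ⟨{i | t ∈ T i}, ?_, fun y hy => ?_⟩
  · calc ∑' i : {i | t ∈ T i}, w i = ∑' i, (T i).indicator (fun _ => w i) t := by
          rw [tsum_subtype {i | t ∈ T i} w]
          rfl
      _ ≤ ∫⁻ t : unitInterval, ∑' i, (T i).indicator (fun _ => w i) t := ht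
      _ = ∑' i, volume (T i) * w i := by
          rw [lintegral_tsum fun i => (hm i).aemeasurable]
          simp only [lintegral_indicator_const (hTm _), mul_comm]
      _ ≤ ∑' i, c i * w i := ENNReal.tsum_le_tsum fun i => mul_le_mul_left (hTc i) _
  · obtain ⟨i, hyi, hi⟩ : ∃ i, y ∈ B i ∧ volume (T i) ≠ c i := by
      by_contra! hall
      refine hy.not_ge ?_
      calc ∑' i, (B i).indicator (fun _ => c i) y = ∑' i : {i | y ∈ B i}, volume (T i) := by
            rw [tsum_subtype {i | y ∈ B i} fun i => volume (T i)]
            refine tsum_congr fun i => ?_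
            by_cases hyi : y ∈ B i <;> simp [hyi, hall]
        _ = volume (⋃ i : {i | y ∈ B i}, T i) :=
            (measure_iUnion (fun i j hij => hTdisj _ _ ⟨Subtype.coe_ne_coe.2 hij, y, i.2, j.2⟩)
              fun i => hTm i).symm
        _ ≤ 1 := prob_le_one
    by_cases hti : t ∈ T i
    · exact ⟨i, hyi, i, hti, ⟨y, hyi, hyi⟩, le_rfl⟩
    · obtain ⟨j, hji, hG, htj⟩ := (hTmax i).resolve_left hi t hti
      exact ⟨i, hyi, j, htj, hG.symm.2, hji.le⟩

lemma exists_dyadic_rank (R : ℝ) :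
    ∃ k : ℝ → ℕ∞, ∀ x ∈ Icc 0 R, ∀ y ∈ Icc 0 R, k y ≤ k x → x ≤ 2 * y := by
  refine ⟨fun x => if x = 0 then ⊤ else (⌊Real.logb 2 (R / x)⌋₊ : ℕ), fun x hx y hy hxy => ?_⟩
  rcases hx.1.eq_or_lt with rfl | hx0
  · linarith [hy.1]
  rcases hy.1.eq_or_lt with rfl | hy0
  · simp [hx0.ne'] at hxy
  have hR : 0 < R := hx0.trans_le hx.2
  simp only [hx0.ne', hy0.ne', if_false, Nat.cast_le] at hxy
  have hlog : Real.logb 2 (R / y) < Real.logb 2 (2 * (R / x)) := by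
    have hlogx : 0 ≤ Real.logb 2 (R / x) :=
      Real.logb_nonneg one_lt_two ((one_le_div hx0).2 hx.2)
    calc Real.logb 2 (R / y) < ⌊Real.logb 2 (R / y)⌋₊ + 1 := Nat.lt_floor_add_one _
      _ ≤ ⌊Real.logb 2 (R / x)⌋₊ + 1 := by gcongr
      _ ≤ Real.logb 2 (R / x) + 1 := by gcongr; exact Nat.floor_le hlogx
      _ = Real.logb 2 (2 * (R / x)) := by
          rw [Real.logb_mul two_ne_zero (by positivity), Real.logb_self_eq_one one_lt_two, add_comm]
  rw [Real.logb_lt_logb_iff one_lt_two (by positivity) (by positivity), ← mul_div_assoc,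
    div_lt_div_iff₀ hy0 hx0] at hlog
  exact (lt_of_mul_lt_mul_left (by linarith) hR.le).le

lemma exists_weighted_vitali_subfamily (B : ι → Set α) (δ : ι → ℝ) (R : ℝ)
    (hδ : ∀ i, δ i ∈ Icc 0 R) (c w : ι → ℝ≥0∞) :
    ∃ S : Set ι, ∑' i : S, w i ≤ ∑' i, c i * w i ∧
      ∀ y, 1 < ∑' i, (B i).indicator (fun _ => c i) y →
        ∃ i, y ∈ B i ∧ ∃ j ∈ S, (B i ∩ B j).Nonempty ∧ δ i ≤ 2 * δ j := by
  obtain ⟨k, hk⟩ := exists_dyadic_rank R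
  obtain ⟨e, he⟩ := exists_injective_nat ι
  let f : ι → ℕ∞ ×ₗ ℕ := fun i => toLex (k (δ i), e i)
  have hf : Function.Injective f := fun i j hij =>
    he (congrArg Prod.snd (toLex.injective hij))
  let _ : LinearOrder ι := LinearOrder.lift' f hf
  have : WellFoundedLT ι := ⟨InvImage.wf f wellFounded_lt⟩
  obtain ⟨S, hSw, hS⟩ := exists_weighted_vitali_subfamily_of_wellOrder B c w
  refine ⟨S, hSw, fun y hy => ?_⟩
  obtain ⟨i, hyi, j, hjS, hij, hji⟩ := hS y hy
  exact ⟨i, hyi, j, hjS, hij, hk _ (hδ i) _ (hδ j) (Prod.Lex.monotone_fst _ _ hji)⟩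

end Selection

section Basics

/-! ### The set functions `Hd`, `HM`, `Wd` and `WM` -/

lemma closedBall_min_of_diam_le [PseudoMetricSpace X] {x : X} {r d : ℝ}
    (h : diam (closedBall x r) ≤ d) : closedBall x (min r d) = closedBall x r := by
  refine (closedBall_subset_closedBall (min_le_left r d)).antisymm fun y hy => ?_
  have hx : x ∈ closedBall x r := mem_closedBall_self (dist_nonneg.trans hy)
  exact le_min hy ((dist_le_diam_of_mem isBounded_closedBall hy hx).trans h)

lemma epow_of_pos {q : ℝ} (hq : 0 < q) (x : ℝ≥0∞) : epow x q = x ^ q :=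
  if_neg fun h => hq.not_ge h.2

lemma ballWeight_empty [MeasurableSpace X] {μ : Measure X} {q : ℝ} {ξ : Set X → ℝ≥0∞}
    (hξ : ξ ∅ = 0) : ballWeight μ q ξ ∅ = 0 := by
  rw [ballWeight, hξ, mul_zero]

lemma ballWeight_eq_zero_of_measure_eq_zero [MeasurableSpace X] {μ : Measure X} {q : ℝ}
    {ξ : Set X → ℝ≥0∞} {B : Set X} (hq : 0 < q) (hB : μ B = 0) : ballWeight μ q ξ B = 0 := by
  rw [ballWeight, epow_of_pos hq, hB, ENNReal.zero_rpow_of_pos hq, zero_mul]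

lemma IsCenteredCover.isWeightedCover [MetricSpace X] {E : Set X} {δ : ℝ}
    {c : ℕ → X} {r : ℕ → ℝ} (h : IsCenteredCover E δ c r) :
    IsWeightedCover E δ (fun _ => 1) c r := by
  refine ⟨h.1, h.2.1, fun x hx => ?_⟩
  obtain ⟨i, hi⟩ := mem_iUnion.1 (h.2.2 hx)
  exact (if_pos hi).ge.trans (ENNReal.le_tsum i)

lemma IsWeightedCover.isCenteredCover [MetricSpace X] {E : Set X} {δ : ℝ} {w : ℕ → ℝ≥0}
    {c : ℕ → X} {r : ℕ → ℝ} (h : IsWeightedCover E δ w c r) : IsCenteredCover E δ c r := by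
  refine ⟨h.1, h.2.1, fun x hx => ?_⟩
  by_contra hx'
  simp only [mem_iUnion, not_exists] at hx'
  simpa [hx'] using h.2.2 x hx

variable [MetricSpace X] [MeasurableSpace X] {μ : Measure X} {q : ℝ} {ξ : Set X → ℝ≥0∞}
  {δ δ' : ℝ} {A B E F : Set X} {a : ℝ≥0∞}

@[simp]
lemma Hd_empty : Hd μ q ξ δ ∅ = 0 := if_pos rfl

@[simp]
lemma Wd_empty : Wd μ q ξ δ ∅ = 0 := if_pos rfl

lemma Hd_le_tsum (hξ : ξ ∅ = 0) (hδ : 0 ≤ δ) {ι : Type*} [Countable ι] {c : ι → X} {r : ι → ℝ}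
    (hc : ∀ i, c i ∈ A) (hr : ∀ i, diam (closedBall (c i) (r i)) ≤ 2 * δ)
    (hA : A ⊆ ⋃ i, closedBall (c i) (r i)) :
    Hd μ q ξ δ A ≤ ∑' i, ballWeight μ q ξ (closedBall (c i) (r i)) := by
  rcases A.eq_empty_or_nonempty with rfl | ⟨a, ha⟩
  · simp
  let _ := Encodable.ofCountable ι
  let c' : ℕ → X := fun n => (Encodable.decode₂ ι n).elim a c
  let r' : ℕ → ℝ := fun n => (Encodable.decode₂ ι n).elim (-1) r
  have hball : ∀ n, closedBall (c' n) (r' n) =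
      ⋃ i ∈ Encodable.decode₂ ι n, closedBall (c i) (r i) := fun n => by
    rcases h : Encodable.decode₂ ι n with _ | i <;> simp [c', r', h]
  have hcover : IsCenteredCover A δ c' r' := by
    refine ⟨fun n => ?_, fun n => ?_, ?_⟩
    · rcases h : Encodable.decode₂ ι n with _ | i <;> simp [c', h, ha, hc]
    · rw [hball]
      rcases Encodable.decode₂ ι n with _ | i <;> simp [hδ, hr]
    · simpa only [hball, Encodable.iUnion_decode₂] using hA
  rw [Hd, if_neg (nonempty_iff_ne_empty.1 ⟨a, ha⟩)]
  refine (iInf₂_le_of_le c' r' (iInf_le _ hcover)).trans_eq ?_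
  simp only [hball]
  exact tsum_iUnion_decode₂ (ballWeight μ q ξ) (ballWeight_empty hξ)
    fun i => closedBall (c i) (r i)

lemma exists_cover_of_Hd_lt (h : Hd μ q ξ δ A < a) :
    ∃ (S : Set ℕ) (c : S → X) (r : S → ℝ), (∀ i, c i ∈ A) ∧
      (∀ i, diam (closedBall (c i) (r i)) ≤ 2 * δ) ∧ A ⊆ ⋃ i, closedBall (c i) (r i) ∧
      ∑' i, ballWeight μ q ξ (closedBall (c i) (r i)) < a := by
  rcases A.eq_empty_or_nonempty with rfl | hA
  · exact ⟨∅, isEmptyElim, isEmptyElim, isEmptyElim, isEmptyElim, empty_subset _, by simpa using h⟩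
  rw [Hd, if_neg hA.ne_empty] at h
  simp only [iInf_lt_iff] at h
  obtain ⟨c, r, ⟨hc, hr, hA⟩, h⟩ := h
  refine ⟨univ, fun i => c i, fun i => r i, fun i => hc i, fun i => hr i, ?_, ?_⟩
  · simpa [iUnion_subtype] using hA
  · rwa [tsum_univ fun i => ballWeight μ q ξ (closedBall (c i) (r i))]

lemma Hd_antitone : Antitone fun δ => Hd μ q ξ δ A := by
  intro δ δ' h
  rcases A.eq_empty_or_nonempty with rfl | hA
  · simp
  simp only [Hd, if_neg hA.ne_empty]
  gcongr with c r
  exact iInf_mono' fun ⟨hc, hr, hA⟩ => ⟨⟨hc, fun i => (hr i).trans (by gcongr), hA⟩, le_rfl⟩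

lemma Hd_iUnion_le (hξ : ξ ∅ = 0) (hδ : 0 ≤ δ) {κ : Type*} [Countable κ] (A : κ → Set X) :
    Hd μ q ξ δ (⋃ n, A n) ≤ ∑' n, Hd μ q ξ δ (A n) := by
  refine ENNReal.le_of_forall_pos_le_add fun ε hε htop => ?_
  obtain ⟨ε', hε', hsum⟩ := ENNReal.exists_pos_sum_of_countable (ENNReal.coe_ne_zero.2 hε.ne') κ
  have hlt n : Hd μ q ξ δ (A n) < Hd μ q ξ δ (A n) + ε' n :=
    ENNReal.lt_add_right (ENNReal.ne_top_of_tsum_ne_top htop.ne n)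
      (ENNReal.coe_ne_zero.2 (hε' n).ne')
  choose S c r hc hr hA hw using fun n => exists_cover_of_Hd_lt (hlt n)
  calc Hd μ q ξ δ (⋃ n, A n)
      ≤ ∑' p : Σ n, S n, ballWeight μ q ξ (closedBall (c p.1 p.2) (r p.1 p.2)) := by
        refine Hd_le_tsum hξ hδ (fun p => mem_iUnion_of_mem p.1 (hc p.1 p.2))
          (fun p => hr p.1 p.2) ?_
        rw [iUnion_sigma]
        exact iUnion_mono hA
    _ ≤ ∑' n, (Hd μ q ξ δ (A n) + ε' n) := by
        rw [ENNReal.tsum_sigma']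
        exact ENNReal.tsum_le_tsum fun n => (hw n).le
    _ ≤ ∑' n, Hd μ q ξ δ (A n) + ε := by
        rw [ENNReal.tsum_add]
        gcongr

lemma Hd_union_le (hξ : ξ ∅ = 0) (hδ : 0 ≤ δ) (A B : Set X) :
    Hd μ q ξ δ (A ∪ B) ≤ Hd μ q ξ δ A + Hd μ q ξ δ B := by
  have h := Hd_iUnion_le (μ := μ) (q := q) hξ hδ fun b : Bool => cond b A B
  rwa [← union_eq_iUnion, tsum_bool, add_comm] at h

lemma HM_le_iff : HM μ q ξ E ≤ a ↔ ∀ F ⊆ E, ∀ δ, 0 < δ → Hd μ q ξ δ F ≤ a := by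
  simp only [HM, H0, iSup_le_iff]

lemma HM_le_of_eventually
    (h : ∀ F ⊆ E, ∀ᶠ δ in nhdsWithin 0 (Ioi 0), Hd μ q ξ δ F ≤ a) : HM μ q ξ E ≤ a := by
  refine HM_le_iff.2 fun F hF δ hδ => ?_
  obtain ⟨δ', hle, hδ'⟩ := ((h F hF).and (Ioc_mem_nhdsGT hδ)).exists
  exact (Hd_antitone hδ'.2).trans hle

lemma Hd_le_HM (hδ : 0 < δ) (h : F ⊆ E) : Hd μ q ξ δ F ≤ HM μ q ξ E :=
  HM_le_iff.1 le_rfl F h δ hδ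

lemma HM_mono (h : A ⊆ B) : HM μ q ξ A ≤ HM μ q ξ B :=
  HM_le_iff.2 fun _ hF _ hδ => Hd_le_HM hδ (hF.trans h)

lemma HM_iUnion_le (hξ : ξ ∅ = 0) {κ : Type*} [Countable κ] (A : κ → Set X) :
    HM μ q ξ (⋃ n, A n) ≤ ∑' n, HM μ q ξ (A n) := by
  refine HM_le_iff.2 fun F hF δ hδ => ?_
  calc Hd μ q ξ δ F = Hd μ q ξ δ (⋃ n, F ∩ A n) := by rw [← inter_iUnion, inter_eq_left.2 hF]
    _ ≤ ∑' n, Hd μ q ξ δ (F ∩ A n) := Hd_iUnion_le hξ hδ.le _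
    _ ≤ ∑' n, HM μ q ξ (A n) := ENNReal.tsum_le_tsum fun n => Hd_le_HM hδ inter_subset_right

lemma HM_singleton_le (hξ : ξ ∅ = 0) (x : X) :
    HM μ q ξ {x} ≤ ballWeight μ q ξ (closedBall x 0) := by
  refine HM_le_iff.2 fun F hF δ hδ => ?_
  rcases subset_singleton_iff_eq.1 hF with rfl | rfl
  · simp
  · simpa using Hd_le_tsum (μ := μ) (q := q) hξ hδ.le (A := {x}) (c := fun _ : Unit => x)
      (r := fun _ => 0) (fun _ => rfl) (fun _ => by simp [hδ.le]) (by simp)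

lemma WM_le_iff : WM μ q ξ E ≤ a ↔ ∀ F ⊆ E, ∀ δ, 0 < δ → Wd μ q ξ δ F ≤ a := by
  simp only [WM, W0, iSup_le_iff]

lemma Wd_le_WM (hδ : 0 < δ) (h : F ⊆ E) : Wd μ q ξ δ F ≤ WM μ q ξ E :=
  WM_le_iff.1 le_rfl F h δ hδ

lemma WM_mono (h : A ⊆ B) : WM μ q ξ A ≤ WM μ q ξ B :=
  WM_le_iff.2 fun _ hF _ hδ => Wd_le_WM hδ (hF.trans h)

lemma Wd_le_Hd : Wd μ q ξ δ E ≤ Hd μ q ξ δ E := by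
  rcases E.eq_empty_or_nonempty with rfl | hE
  · simp
  rw [Wd, Hd, if_neg hE.ne_empty, if_neg hE.ne_empty]
  refine le_iInf₂ fun c r => le_iInf fun h => ?_
  exact (iInf₂_le_of_le _ c (iInf₂_le_of_le r h.isWeightedCover le_rfl)).trans_eq (by simp)

lemma WM_le_HM : WM μ q ξ E ≤ HM μ q ξ E :=
  WM_le_iff.2 fun _ hF _ hδ => Wd_le_Hd.trans (Hd_le_HM hδ hF)

lemma exists_weightedCover_of_Wd_lt (hE : E.Nonempty) (h : Wd μ q ξ δ E < a) :
    ∃ w c r, IsWeightedCover E δ w c r ∧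
      ∑' i, (w i : ℝ≥0∞) * ballWeight μ q ξ (closedBall (c i) (r i)) < a := by
  rw [Wd, if_neg hE.ne_empty] at h
  simpa only [iInf_lt_iff, exists_prop] using h

lemma le_mul_Wd {t : ℝ≥0} (ht : t ≠ 0) (hE : E.Nonempty)
    (h : ∀ w c r, IsWeightedCover E δ w c r →
      a ≤ t * ∑' i, (w i : ℝ≥0∞) * ballWeight μ q ξ (closedBall (c i) (r i))) :
    a ≤ t * Wd μ q ξ δ E := by
  have ht' : (t : ℝ≥0∞) ≠ 0 := ENNReal.coe_ne_zero.2 ht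
  rw [mul_comm, ← ENNReal.div_le_iff ht' ENNReal.coe_ne_top]
  refine le_of_forall_gt fun b hb => ?_
  obtain ⟨w, c, r, hcov, hlt⟩ := exists_weightedCover_of_Wd_lt hE hb
  refine lt_of_le_of_lt ?_ hlt
  rw [ENNReal.div_le_iff ht' ENNReal.coe_ne_top, mul_comm]
  exact h w c r hcov

end Basics

section HausdorffMeasure

/-! ### `HM` as a metric outer measure -/

variable [MetricSpace X] [MeasurableSpace X] {μ : Measure X} {q : ℝ} {ξ : Set X → ℝ≥0∞}
  {δ : ℝ} {A B : Set X} {a : ℝ≥0∞}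

lemma Hd_le_tsum_of_separated (hξ : ξ ∅ = 0) (hδ : 0 ≤ δ)
    (hAB : ∀ x ∈ A, ∀ y ∈ B, 2 * δ < dist x y) {ι : Type*} [Countable ι] {c : ι → X} {r : ι → ℝ}
    (hc : ∀ i, c i ∈ A ∪ B) (hr : ∀ i, diam (closedBall (c i) (r i)) ≤ 2 * δ)
    (hA : A ⊆ ⋃ i, closedBall (c i) (r i)) :
    Hd μ q ξ δ A ≤ ∑' i : c ⁻¹' A, ballWeight μ q ξ (closedBall (c i) (r i)) := by
  refine Hd_le_tsum hξ hδ (c := fun i : c ⁻¹' A => c i) (r := fun i => r i) (fun i => i.2)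
    (fun i => hr i) fun y hy => ?_
  obtain ⟨i, hi⟩ := mem_iUnion.1 (hA hy)
  refine mem_iUnion.2 ⟨⟨i, (hc i).resolve_right fun hB => (hAB y hy _ hB).not_ge ?_⟩, hi⟩
  have hci : c i ∈ closedBall (c i) (r i) := mem_closedBall_self (dist_nonneg.trans hi)
  exact (dist_le_diam_of_mem isBounded_closedBall hi hci).trans (hr i)

lemma Hd_add_le_Hd_union (hξ : ξ ∅ = 0) (hδ : 0 ≤ δ)
    (hAB : ∀ x ∈ A, ∀ y ∈ B, 2 * δ < dist x y) :
    Hd μ q ξ δ A + Hd μ q ξ δ B ≤ Hd μ q ξ δ (A ∪ B) := by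
  refine le_of_forall_gt fun a ha => ?_
  obtain ⟨S, c, r, hc, hr, hcov, hlt⟩ := exists_cover_of_Hd_lt ha
  let w : S → ℝ≥0∞ := fun i => ballWeight μ q ξ (closedBall (c i) (r i))
  have hdisj : Disjoint (c ⁻¹' A) (c ⁻¹' B) := .preimage c <| disjoint_left.2 fun x hxA hxB =>
    (hAB x hxA x hxB).not_ge (by rw [dist_self]; positivity)
  calc Hd μ q ξ δ A + Hd μ q ξ δ B
      ≤ ∑' i : c ⁻¹' A, w i + ∑' i : c ⁻¹' B, w i := add_le_add
        (Hd_le_tsum_of_separated hξ hδ hAB hc hr (subset_union_left.trans hcov))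
        (Hd_le_tsum_of_separated hξ hδ (fun x hx y hy => dist_comm x y ▸ hAB y hy x hx)
          (fun i => (hc i).symm) hr (subset_union_right.trans hcov))
    _ = ∑' i : ↑(c ⁻¹' A ∪ c ⁻¹' B), w i :=
        (ENNReal.summable.tsum_union_disjoint hdisj ENNReal.summable).symm
    _ ≤ ∑' i, w i := ENNReal.tsum_comp_le_tsum_of_injective Subtype.val_injective w
    _ < a := hlt

lemma HM_add_HM_le_of_eventually
    (h : ∀ F ⊆ A, ∀ G ⊆ B, ∀ᶠ δ in nhdsWithin 0 (Ioi 0), Hd μ q ξ δ F + Hd μ q ξ δ G ≤ a) :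
    HM μ q ξ A + HM μ q ξ B ≤ a := by
  refine ENNReal.biSup_add_biSup_le' ⟨∅, empty_subset A⟩ ⟨∅, empty_subset B⟩ fun F hF G hG => ?_
  refine ENNReal.biSup_add_biSup_le' ⟨1, one_pos⟩ ⟨1, one_pos⟩ fun δ₁ hδ₁ δ₂ hδ₂ => ?_
  obtain ⟨δ, hle, hδ⟩ := ((h F hF G hG).and (Ioc_mem_nhdsGT (lt_min hδ₁ hδ₂))).exists
  exact (add_le_add (Hd_antitone (hδ.2.trans (min_le_left _ _)))
    (Hd_antitone (hδ.2.trans (min_le_right _ _)))).trans hle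

/-- The set function `HM μ q ξ` as an outer measure. -/
def hausdorffOuterMeasure (μ : Measure X) (q : ℝ) (ξ : Set X → ℝ≥0∞) (hξ : ξ ∅ = 0) :
    OuterMeasure X where
  measureOf := HM μ q ξ
  empty := nonpos_iff_eq_zero.1 <| HM_le_iff.2 fun F hF _ _ => by simp [subset_empty_iff.1 hF]
  mono := HM_mono
  iUnion_nat s _ := HM_iUnion_le hξ s

lemma isMetric_hausdorffOuterMeasure (hξ : ξ ∅ = 0) :
    (hausdorffOuterMeasure μ q ξ hξ).IsMetric := by
  rintro A B ⟨ρ, hρ, hAB⟩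
  refine (measure_union_le A B).antisymm (HM_add_HM_le_of_eventually fun F hF G hG => ?_)
  obtain ⟨s, hs, hsρ⟩ := ENNReal.lt_iff_exists_nnreal_btwn.1 (pos_iff_ne_zero.2 hρ)
  have hs : (0 : ℝ) < s / 2 := half_pos (NNReal.coe_pos.2 (ENNReal.coe_pos.1 hs))
  have hdist : ∀ x ∈ F, ∀ y ∈ G, (s : ℝ) < dist x y := fun x hx y hy => by
    have h := hsρ.trans_le (hAB x (hF hx) y (hG hy))
    rw [edist_nndist, ENNReal.coe_lt_coe] at h
    rwa [← coe_nndist, NNReal.coe_lt_coe]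
  filter_upwards [Ioc_mem_nhdsGT hs] with δ hδ
  have hFG : ∀ x ∈ F, ∀ y ∈ G, 2 * δ < dist x y := fun x hx y hy => by
    linarith [hdist x hx y hy, hδ.2]
  exact (Hd_add_le_Hd_union hξ hδ.1.le hFG).trans (Hd_le_HM hδ.1 (union_subset_union hF hG))

lemma isMetric_restrict {X : Type*} [EMetricSpace X] {m : OuterMeasure X} (hm : m.IsMetric)
    (E : Set X) : (OuterMeasure.restrict E m).IsMetric := fun s t hst => by
  simp only [OuterMeasure.restrict_apply, union_inter_distrib_right]
  exact hm _ _ (hst.mono inter_subset_left inter_subset_left)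

variable [BorelSpace X]

/-- The Borel measure `s ↦ HM μ q ξ (s ∩ E)`. The outer measure is restricted before it is turned
into a measure, because `E` need not be measurable. -/
def hausdorffMeasureOn (μ : Measure X) (q : ℝ) (ξ : Set X → ℝ≥0∞) (hξ : ξ ∅ = 0) (E : Set X) :
    Measure X :=
  (OuterMeasure.restrict E (hausdorffOuterMeasure μ q ξ hξ)).toMeasure
    (isMetric_restrict (isMetric_hausdorffOuterMeasure hξ) E).le_caratheodory

lemma hausdorffMeasureOn_apply (hξ : ξ ∅ = 0) (E : Set X) {s : Set X} (hs : MeasurableSet s) :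
    hausdorffMeasureOn μ q ξ hξ E s = HM μ q ξ (s ∩ E) := by
  rw [hausdorffMeasureOn, toMeasure_apply _ _ hs, OuterMeasure.restrict_apply]
  rfl

end HausdorffMeasure

section Doubling

/-! ### Doubling ball weights -/

lemma closedBall_subset_closedBall_five_mul [PseudoMetricSpace X] {x y : X} {r s : ℝ}
    (h : (closedBall x r ∩ closedBall y s).Nonempty) (hrs : r ≤ 2 * s) :
    closedBall x r ⊆ closedBall y (5 * s) := by
  obtain ⟨z, hzx, hzy⟩ := h
  intro a ha
  rw [mem_closedBall] at *
  linarith [dist_triangle4 a x z y, dist_comm x z]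

variable [MetricSpace X] [MeasurableSpace X] {μ : Measure X} {q : ℝ} {ξ : Set X → ℝ≥0∞}
  {δ η : ℝ} {A E F : Set X} {C : ℝ≥0}

/-- The doubling condition used to compare covers by enlarged balls: up to the scale `η`, the
weight of a ball centred in `E` controls the weight of a ball of ten times its radius, whose centre
may be moved to any point of the five times enlarged ball. -/
def BallWeightDoublingOn (μ : Measure X) (q : ℝ) (ξ : Set X → ℝ≥0∞) (E : Set X) (C : ℝ≥0)
    (η : ℝ) : Prop :=
  ∀ r ∈ Icc 0 η, ∀ x ∈ E, ∀ y ∈ closedBall x (5 * r),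
    ballWeight μ q ξ (closedBall y (10 * r)) ≤ C * ballWeight μ q ξ (closedBall x r)

namespace BallWeightDoublingOn

lemma mono (hE : BallWeightDoublingOn μ q ξ E C η) (hF : F ⊆ E) :
    BallWeightDoublingOn μ q ξ F C η :=
  fun r hr x hx => hE r hr x (hF hx)

lemma Hd_le_tsum_of_subset_iUnion (hE : BallWeightDoublingOn μ q ξ E C η) (hξ : ξ ∅ = 0)
    (hδ : 0 ≤ δ) {ι : Type*} [Countable ι] {x : ι → X} {r : ι → ℝ} (hx : ∀ i, x i ∈ E)
    (hrη : ∀ i, r i ≤ η) (hrδ : ∀ i, 10 * r i ≤ δ) (hA : A ⊆ ⋃ i, closedBall (x i) (5 * r i)) :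
    Hd μ q ξ δ A ≤ C * ∑' i, ballWeight μ q ξ (closedBall (x i) (r i)) := by
  let J : Set ι := {i | (A ∩ closedBall (x i) (5 * r i)).Nonempty}
  choose y hyA hyx using fun i : J => i.2
  have hr : ∀ i : J, 0 ≤ r i := fun i => by
    linarith [dist_nonneg.trans (mem_closedBall.1 (hyx i))]
  calc Hd μ q ξ δ A
      ≤ ∑' i : J, ballWeight μ q ξ (closedBall (y i) (10 * r i)) := by
        refine Hd_le_tsum hξ hδ hyA (fun i => ?_) fun z hz => ?_
        · linarith [diam_closedBall (x := y i) (by linarith [hr i] : 0 ≤ 10 * r i), hrδ i]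
        · obtain ⟨i, hi⟩ := mem_iUnion.1 (hA hz)
          let j : J := ⟨i, z, hz, hi⟩
          refine mem_iUnion.2 ⟨j, mem_closedBall.2 ?_⟩
          linarith [dist_triangle_right z (y j) (x i), mem_closedBall.1 hi,
            mem_closedBall.1 (hyx j)]
    _ ≤ ∑' i : J, C * ballWeight μ q ξ (closedBall (x i) (r i)) :=
        ENNReal.tsum_le_tsum fun i => hE (r i) ⟨hr i, hrη i⟩ (x i) (hx i) (y i) (hyx i)
    _ = C * ∑' i : J, ballWeight μ q ξ (closedBall (x i) (r i)) := ENNReal.tsum_mul_left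
    _ ≤ C * ∑' i, ballWeight μ q ξ (closedBall (x i) (r i)) := by
        gcongr
        exact ENNReal.tsum_comp_le_tsum_of_injective Subtype.val_injective
          fun i => ballWeight μ q ξ (closedBall (x i) (r i))

lemma Hd_le_tsum_of_isWeightedCover (hE : BallWeightDoublingOn μ q ξ E C η) (hξ : ξ ∅ = 0)
    (hδ : 0 ≤ δ) (hδη : δ ≤ 10 * η) (hF : F ⊆ E) {w : ℕ → ℝ≥0} {c : ℕ → X} {r : ℕ → ℝ}
    (h : IsWeightedCover F (δ / 20) w c r) :
    Hd μ q ξ δ F ≤ 2 * C * ∑' i, (w i : ℝ≥0∞) * ballWeight μ q ξ (closedBall (c i) (r i)) := by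
  let ρ : ℕ → ℝ := fun i => min (r i) (δ / 10)
  have hρ : ∀ i, closedBall (c i) (ρ i) = closedBall (c i) (r i) := fun i =>
    closedBall_min_of_diam_le ((h.2.1 i).trans_eq (by ring))
  have hρδ : ∀ i, ρ i ≤ δ / 10 := fun i => min_le_right _ _
  obtain ⟨S, hS, hcov⟩ := exists_weighted_vitali_subfamily (fun i => closedBall (c i) (ρ i))
    (fun i => max (ρ i) 0) (δ / 10)
    (fun i => ⟨le_max_right _ _, max_le (hρδ i) (by positivity)⟩) (fun i => 2 * (w i : ℝ≥0∞))
    fun i => ballWeight μ q ξ (closedBall (c i) (ρ i))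
  have hFS : F ⊆ ⋃ j : S, closedBall (c j) (5 * ρ j) := fun y hy => by
    have hy1 : 1 < ∑' i, (closedBall (c i) (ρ i)).indicator (fun _ => 2 * (w i : ℝ≥0∞)) y := by
      calc (1 : ℝ≥0∞) < 2 * 1 := by norm_num
        _ ≤ 2 * ∑' i, (if y ∈ closedBall (c i) (r i) then (w i : ℝ≥0∞) else 0) := by
            gcongr
            exact h.2.2 y hy
        _ = _ := by simp only [← ENNReal.tsum_mul_left, hρ, indicator, mul_ite, mul_zero]
    obtain ⟨i, hyi, j, hjS, ⟨z, hzi, hzj⟩, hij⟩ := hcov y hy1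
    rw [max_eq_left (dist_nonneg.trans hzi), max_eq_left (dist_nonneg.trans hzj)] at hij
    exact mem_iUnion_of_mem ⟨j, hjS⟩ (closedBall_subset_closedBall_five_mul ⟨z, hzi, hzj⟩ hij hyi)
  calc Hd μ q ξ δ F
      ≤ C * ∑' i : S, ballWeight μ q ξ (closedBall (c i) (ρ i)) :=
        hE.Hd_le_tsum_of_subset_iUnion hξ hδ (fun i => hF (h.1 i))
          (fun i => by linarith [hρδ i]) (fun i => by linarith [hρδ i]) hFS
    _ ≤ C * ∑' i, 2 * (w i : ℝ≥0∞) * ballWeight μ q ξ (closedBall (c i) (ρ i)) := by gcongr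
    _ = _ := by simp only [mul_assoc, ENNReal.tsum_mul_left, hρ, mul_left_comm (C : ℝ≥0∞)]

lemma HM_le_mul_WM (hE : BallWeightDoublingOn μ q ξ E C η) (hξ : ξ ∅ = 0) (hη : 0 < η)
    (hC : C ≠ 0) : HM μ q ξ E ≤ 2 * C * WM μ q ξ E := by
  refine HM_le_of_eventually fun F hF => ?_
  filter_upwards [Ioc_mem_nhdsGT (by positivity : 0 < 10 * η)] with δ hδ
  have hδ0 : 0 < δ := hδ.1
  rcases F.eq_empty_or_nonempty with rfl | hF'
  · simp
  calc Hd μ q ξ δ F ≤ (2 * C : ℝ≥0) * Wd μ q ξ (δ / 20) F :=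
        le_mul_Wd (by positivity) hF' fun w c r h => by
          exact_mod_cast hE.Hd_le_tsum_of_isWeightedCover hξ hδ0.le hδ.2 hF h
    _ ≤ 2 * C * WM μ q ξ E := by
        push_cast
        gcongr
        exact Wd_le_WM (by positivity) hF

lemma Hd_le_tsum_add_tsum_compl (hE : BallWeightDoublingOn μ q ξ E C η) (hξ : ξ ∅ = 0)
    (hδ : 0 ≤ δ) {ι : Type*} [Countable ι] {x : ι → X} {r : ι → ℝ} (hx : ∀ i, x i ∈ E)
    (hr : ∀ i, 0 ≤ r i) (hrη : ∀ i, r i ≤ η) (hrδ : ∀ i, 10 * r i ≤ δ) (v : Finset ι)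
    (hv : E \ ⋃ i ∈ v, closedBall (x i) (r i) ⊆ ⋃ i : {i // i ∉ v}, closedBall (x i) (5 * r i)) :
    Hd μ q ξ δ E ≤ ∑' i, ballWeight μ q ξ (closedBall (x i) (r i)) +
      C * ∑' i : {i // i ∉ v}, ballWeight μ q ξ (closedBall (x i) (r i)) := by
  set V : Set X := ⋃ i ∈ v, closedBall (x i) (r i)
  have hV : Hd μ q ξ δ (E ∩ V) ≤ ∑' i : v, ballWeight μ q ξ (closedBall (x i) (r i)) :=
    Hd_le_tsum hξ hδ (fun i => ⟨hx i, mem_biUnion i.2 (mem_closedBall_self (hr i))⟩)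
      (fun i => by linarith [diam_closedBall (x := x i) (hr i), hrδ i, hr i])
      (inter_subset_right.trans_eq (biUnion_eq_iUnion _ _))
  have hV' : Hd μ q ξ δ (E \ V) ≤
      C * ∑' i : {i // i ∉ v}, ballWeight μ q ξ (closedBall (x i) (r i)) :=
    hE.Hd_le_tsum_of_subset_iUnion hξ hδ (fun i => hx i) (fun i => hrη i) (fun i => hrδ i) hv
  calc Hd μ q ξ δ E ≤ Hd μ q ξ δ (E ∩ V) + Hd μ q ξ δ (E \ V) := by
        simpa only [inter_union_sdiff] using Hd_union_le hξ hδ (E ∩ V) (E \ V)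
    _ ≤ _ := by
        gcongr
        exact hV.trans (ENNReal.tsum_comp_le_tsum_of_injective Subtype.val_injective
          fun i => ballWeight μ q ξ (closedBall (x i) (r i)))

lemma mul_Hd_le_tsum (hE : BallWeightDoublingOn μ q ξ E C η) (hξ : ξ ∅ = 0) (hδ : 0 ≤ δ)
    {ι : Type*} [Countable ι] {x : ι → X} {r : ι → ℝ} (hx : ∀ i, x i ∈ E) (hr : ∀ i, 0 ≤ r i)
    (hrη : ∀ i, r i ≤ η) (hrδ : ∀ i, 10 * r i ≤ δ)
    (hcov : ∀ v : Finset ι, E \ ⋃ i ∈ v, closedBall (x i) (r i) ⊆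
      ⋃ i : {i // i ∉ v}, closedBall (x i) (5 * r i))
    {t : ℝ≥0∞} {a : ι → ℝ≥0∞} (ha : ∀ i, t * ballWeight μ q ξ (closedBall (x i) (r i)) ≤ a i)
    (hsum : ∑' i, a i ≠ ∞) : t * Hd μ q ξ δ E ≤ ∑' i, a i := by
  let W : ι → ℝ≥0∞ := fun i => ballWeight μ q ξ (closedBall (x i) (r i))
  have hbound : ∀ v : Finset ι,
      t * Hd μ q ξ δ E ≤ ∑' i, a i + C * ∑' i : {i // i ∉ v}, a i := fun v => by
    calc t * Hd μ q ξ δ E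
        ≤ t * (∑' i, W i + C * ∑' i : {i // i ∉ v}, W i) := by
          gcongr
          exact hE.Hd_le_tsum_add_tsum_compl hξ hδ hx hr hrη hrδ v (hcov v)
      _ = ∑' i, t * W i + C * ∑' i : {i // i ∉ v}, t * W i := by
          rw [mul_add, mul_left_comm, ENNReal.tsum_mul_left, ENNReal.tsum_mul_left]
      _ ≤ _ := by
          gcongr with i i
          exacts [ha i, ha i]
  have hlim := tendsto_const_nhds (x := ∑' i, a i).add (ENNReal.Tendsto.const_mul
    (ENNReal.tendsto_tsum_compl_atTop_zero hsum) (.inr (ENNReal.coe_ne_top (r := C))))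
  rw [mul_zero, add_zero] at hlim
  exact ge_of_tendsto' hlim hbound

end BallWeightDoublingOn

end Doubling

section Vitali

/-! ### Covering by balls of large measure -/

lemma exists_countable_disjoint_fine_cover [PseudoMetricSpace X] {G : Set X} (hG : IsSeparable G)
    {P : Set (X × ℝ)} {ρ : ℝ} (hPG : ∀ p ∈ P, p.1 ∈ G) (hPρ : ∀ p ∈ P, p.2 ∈ Ioc 0 ρ)
    (hP : ∀ x ∈ G, ∃ᶠ r in nhdsWithin 0 (Ioi 0), (x, r) ∈ P) :
    ∃ u ⊆ P, u.Countable ∧ (u.PairwiseDisjoint fun p => closedBall p.1 p.2) ∧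
      ∀ v : Finset u, G \ ⋃ p ∈ v, closedBall p.1.1 p.1.2 ⊆
        ⋃ p : {p // p ∉ v}, closedBall p.1.1.1 (5 * p.1.1.2) := by
  obtain ⟨u, huP, hdisj, hcov⟩ := Vitali.exists_disjoint_subfamily_covering_enlargement
    (fun p : X × ℝ => closedBall p.1 p.2) P (fun p => p.2) 2 one_lt_two
    (fun p hp => (hPρ p hp).1.le) ρ (fun p hp => (hPρ p hp).2)
    fun p hp => nonempty_closedBall.2 (hPρ p hp).1.le
  refine ⟨u, huP, ?_, hdisj, fun v y hy => ?_⟩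
  · have := hG.separableSpace
    refine PairwiseDisjoint.countable_of_isOpen
      (s := fun p : X × ℝ => ((↑) ⁻¹' ball p.1 p.2 : Set G))
      (fun p hp p' hp' hne => ?_) (fun p _ => isOpen_ball.preimage continuous_subtype_val)
      fun p hp => ⟨⟨p.1, hPG p (huP hp)⟩, mem_ball_self (hPρ p (huP hp)).1⟩
    exact ((hdisj hp hp' hne).mono ball_subset_closedBall ball_subset_closedBall).preimage _
  · have hclosed : IsClosed (⋃ p ∈ v, closedBall p.1.1 p.1.2) :=
      v.finite_toSet.isClosed_biUnion fun p _ => isClosed_closedBall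
    have hnear := (eventually_closedBall_subset (hclosed.compl_mem_nhds hy.2)).filter_mono
      (nhdsWithin_le_nhds (s := Ioi 0))
    obtain ⟨r, hrP, hr⟩ := ((hP y hy.1).and_eventually hnear).exists
    obtain ⟨p, hpu, hyp, hrp⟩ := hcov (y, r) hrP
    have hpv : (⟨p, hpu⟩ : u) ∉ v := fun hpv => by
      obtain ⟨z, hzy, hzp⟩ := hyp
      exact hr hzy (mem_biUnion hpv hzp)
    exact mem_iUnion_of_mem ⟨⟨p, hpu⟩, hpv⟩
      (closedBall_subset_closedBall_five_mul hyp hrp (mem_closedBall_self (hPρ _ hrP).1.le))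

variable [MetricSpace X] [MeasurableSpace X] [BorelSpace X] {μ ν : Measure X} {q : ℝ}
  {ξ : Set X → ℝ≥0∞} {δ η : ℝ} {G U : Set X} {C : ℝ≥0} {t : ℝ≥0∞}

namespace BallWeightDoublingOn

lemma mul_Hd_le_measure_isOpen (hG : BallWeightDoublingOn μ q ξ G C η) (hξ : ξ ∅ = 0)
    (hη : 0 < η) (hδ : 0 < δ) (hsep : IsSeparable G) (hGU : G ⊆ U) (hU : IsOpen U)
    (hUtop : ν U ≠ ∞) (hν : ∀ x ∈ G, ∃ᶠ r in nhdsWithin 0 (Ioi 0),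
      t * ballWeight μ q ξ (closedBall x r) ≤ ν (closedBall x r)) :
    t * Hd μ q ξ δ G ≤ ν U := by
  let B : X × ℝ → Set X := fun p => closedBall p.1 p.2
  let P : Set (X × ℝ) := {p | p.1 ∈ G ∧ p.2 ∈ Ioc 0 (min (δ / 10) η) ∧ B p ⊆ U ∧
    t * ballWeight μ q ξ (B p) ≤ ν (B p)}
  obtain ⟨u, huP, hu, hdisj, hcov⟩ := exists_countable_disjoint_fine_cover hsep
    (P := P) (fun p hp => hp.1) (fun p hp => hp.2.1) fun x hx => by
      have hnear := (eventually_closedBall_subset (hU.mem_nhds (hGU hx))).filter_mono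
        (nhdsWithin_le_nhds (s := Ioi 0))
      have hsmall := Ioc_mem_nhdsGT (lt_min (by positivity : 0 < δ / 10) hη)
      exact ((hν x hx).and_eventually (hnear.and hsmall)).mono
        fun r ⟨hle, hrU, hr⟩ => ⟨hx, hr, hrU, hle⟩
  have := hu.to_subtype
  have hsum : ∑' p : u, ν (B p) ≤ ν U :=
    (tsum_meas_le_meas_iUnion_of_disjoint ν (fun p => isClosed_closedBall.measurableSet)
      (hdisj.subtype _ _)).trans (measure_mono (iUnion_subset fun p => (huP p.2).2.2.1))
  have hrad : ∀ p : u, p.1.2 ≤ δ / 10 ∧ p.1.2 ≤ η := fun p => le_min_iff.1 (huP p.2).2.1.2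
  refine le_trans ?_ hsum
  exact hG.mul_Hd_le_tsum hξ hδ.le (fun p => (huP p.2).1) (fun p => (huP p.2).2.1.1.le)
    (fun p => (hrad p).2) (fun p => by linarith [(hrad p).1]) hcov (fun p => (huP p.2).2.2.2)
    (ne_top_of_le_ne_top hUtop hsum)

lemma mul_HM_le_measure [IsFiniteMeasure ν] (hG : BallWeightDoublingOn μ q ξ G C η)
    (hξ : ξ ∅ = 0) (hη : 0 < η) (hsep : IsSeparable G)
    (hν : ∀ x ∈ G, ∃ᶠ r in nhdsWithin 0 (Ioi 0),
      t * ballWeight μ q ξ (closedBall x r) ≤ ν (closedBall x r)) :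
    t * HM μ q ξ G ≤ ν G := by
  simp only [HM, H0, ENNReal.mul_iSup, iSup_le_iff]
  intro F hF δ hδ
  refine le_trans ?_ (measure_mono hF)
  rw [F.measure_eq_iInf_isOpen ν]
  exact le_iInf₂ fun U hFU => le_iInf fun hU => (hG.mono hF).mul_Hd_le_measure_isOpen
    hξ hη hδ (hsep.mono hF) hFU hU (measure_ne_top ν U) fun x hx => hν x (hF hx)

end BallWeightDoublingOn

end Vitali

section Density

/-! ### Upper densities and the comparison of `HM` with `WM` -/

variable [MetricSpace X] [MeasurableSpace X] [BorelSpace X] {μ ν : Measure X} {q : ℝ}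
  {ξ : Set X → ℝ≥0∞} {δ η : ℝ} {E L : Set X} {C t : ℝ≥0}

lemma IsWeightedCover.measure_le_tsum {w : ℕ → ℝ≥0} {c : ℕ → X} {r : ℕ → ℝ}
    (h : IsWeightedCover L δ w c r) (ν : Measure X) :
    ν L ≤ ∑' i, (w i : ℝ≥0∞) * ν (closedBall (c i) (r i)) := by
  let f : ℕ → X → ℝ≥0∞ := fun i => (closedBall (c i) (r i)).indicator fun _ => (w i : ℝ≥0∞)
  have hf : ∀ i, Measurable (f i) := fun i =>
    measurable_const.indicator isClosed_closedBall.measurableSet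
  calc ν L ≤ ν {y | 1 ≤ ∑' i, f i y} := measure_mono h.2.2
    _ ≤ ∫⁻ y, ∑' i, f i y ∂ν := by
        simpa only [one_mul] using mul_meas_ge_le_lintegral (Measurable.tsum hf) 1
    _ = ∑' i, (w i : ℝ≥0∞) * ν (closedBall (c i) (r i)) := by
        rw [lintegral_tsum fun i => (hf i).aemeasurable]
        simp only [f, lintegral_indicator_const isClosed_closedBall.measurableSet]

lemma measure_le_mul_Wd (ht : t ≠ 0) (hL : ∀ x ∈ L, ∀ r ∈ Icc 0 η,
      ν (closedBall x r) ≤ t * ballWeight μ q ξ (closedBall x r)) :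
    ν L ≤ t * Wd μ q ξ (η / 2) L := by
  rcases L.eq_empty_or_nonempty with rfl | hL'
  · simp
  refine le_mul_Wd ht hL' fun w c r h => ?_
  have hball : ∀ i, ν (closedBall (c i) (r i)) ≤
      t * ballWeight μ q ξ (closedBall (c i) (r i)) := fun i => by
    rw [← closedBall_min_of_diam_le ((h.2.1 i).trans_eq (mul_div_cancel₀ η two_ne_zero))]
    rcases lt_or_ge (min (r i) η) 0 with hneg | hnonneg
    · simp [closedBall_eq_empty.2 hneg]
    · exact hL (c i) (h.1 i) _ ⟨hnonneg, min_le_right _ _⟩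
  calc ν L ≤ ∑' i, (w i : ℝ≥0∞) * ν (closedBall (c i) (r i)) := h.measure_le_tsum ν
    _ ≤ ∑' i, (w i : ℝ≥0∞) * (t * ballWeight μ q ξ (closedBall (c i) (r i))) := by
        gcongr with i
        exact hball i
    _ = t * ∑' i, (w i : ℝ≥0∞) * ballWeight μ q ξ (closedBall (c i) (r i)) := by
        simp only [mul_left_comm _ (t : ℝ≥0∞), ENNReal.tsum_mul_left]

lemma measure_le_mul_WM_of_eventually (ht : t ≠ 0)
    (hL : ∀ x ∈ L, ∀ᶠ r in nhdsWithin 0 (Ici 0),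
      ν (closedBall x r) ≤ t * ballWeight μ q ξ (closedBall x r)) :
    ν L ≤ t * WM μ q ξ L := by
  let Ln : ℕ → Set X := fun n => {x ∈ L | ∀ r ∈ Icc (0 : ℝ) (1 / (n + 1)),
    ν (closedBall x r) ≤ t * ballWeight μ q ξ (closedBall x r)}
  have hmono : Monotone Ln := fun n m hnm x hx =>
    ⟨hx.1, fun r hr => hx.2 r ⟨hr.1, hr.2.trans (Nat.one_div_le_one_div hnm)⟩⟩
  have hLn : L ⊆ ⋃ n, Ln n := fun x hx => by
    obtain ⟨ε, hε, hεle⟩ := nhdsGE_basis_Icc.eventually_iff.1 (hL x hx)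
    obtain ⟨n, hn⟩ := exists_nat_one_div_lt hε
    exact mem_iUnion.2 ⟨n, hx, fun r hr => hεle ⟨hr.1, hr.2.trans hn.le⟩⟩
  calc ν L ≤ ⨆ n, ν (Ln n) := (measure_mono hLn).trans_eq hmono.measure_iUnion
    _ ≤ t * WM μ q ξ L := iSup_le fun n => by
        refine (measure_le_mul_Wd ht fun x hx => hx.2).trans ?_
        gcongr
        exact Wd_le_WM (half_pos Nat.one_div_pos_of_nat) fun x hx => hx.1

lemma hausdorffMeasureOn_closedBall_zero_le (hξ : ξ ∅ = 0) (E : Set X) (x : X) :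
    hausdorffMeasureOn μ q ξ hξ E (closedBall x 0) ≤ ballWeight μ q ξ (closedBall x 0) := by
  rw [hausdorffMeasureOn_apply hξ E isClosed_closedBall.measurableSet]
  exact (HM_mono (inter_subset_left.trans_eq closedBall_zero)).trans (HM_singleton_le hξ x)

namespace BallWeightDoublingOn

lemma HM_eq_zero_of_frequently (hE : BallWeightDoublingOn μ q ξ E C η) (hξ : ξ ∅ = 0)
    (hη : 0 < η) (hsep : IsSeparable E) (ht : 1 < t) (hfin : HM μ q ξ E ≠ ∞) {s : Set X}
    (hs : MeasurableSet s) (hν : ∀ x ∈ s ∩ E, ∃ᶠ r in nhdsWithin 0 (Ioi 0),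
      t * ballWeight μ q ξ (closedBall x r) ≤
        hausdorffMeasureOn μ q ξ hξ E (closedBall x r)) :
    HM μ q ξ (s ∩ E) = 0 := by
  have : IsFiniteMeasure (hausdorffMeasureOn μ q ξ hξ E) :=
    ⟨by rwa [hausdorffMeasureOn_apply hξ E .univ, univ_inter, lt_top_iff_ne_top]⟩
  have hle : t * HM μ q ξ (s ∩ E) ≤ 1 * HM μ q ξ (s ∩ E) := by
    calc t * HM μ q ξ (s ∩ E) ≤ hausdorffMeasureOn μ q ξ hξ E (s ∩ E) :=
          (hE.mono inter_subset_right).mul_HM_le_measure hξ hη (hsep.mono inter_subset_right) hν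
      _ ≤ hausdorffMeasureOn μ q ξ hξ E s := measure_mono inter_subset_left
      _ = 1 * HM μ q ξ (s ∩ E) := by rw [one_mul, hausdorffMeasureOn_apply hξ E hs]
  by_contra h0
  have hne : HM μ q ξ (s ∩ E) ≠ ∞ := ne_top_of_le_ne_top hfin (HM_mono inter_subset_right)
  exact hle.not_gt (ENNReal.mul_lt_mul_left h0 hne (ENNReal.one_lt_coe_iff.2 ht))

lemma HM_le_mul_WM_of_one_lt (hE : BallWeightDoublingOn μ q ξ E C η) (hξ : ξ ∅ = 0)
    (hη : 0 < η) (hsep : IsSeparable E) (hfin : HM μ q ξ E ≠ ∞) (ht : 1 < t) :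
    HM μ q ξ E ≤ t * WM μ q ξ E := by
  set ν := hausdorffMeasureOn μ q ξ hξ E with hν
  let L : Set X := {x ∈ E | ∀ᶠ r in nhdsWithin 0 (Ioi 0),
    ν (closedBall x r) ≤ t * ballWeight μ q ξ (closedBall x r)}
  have hνL : ν L ≤ t * WM μ q ξ L := by
    refine measure_le_mul_WM_of_eventually (zero_lt_one.trans ht).ne' fun x hx => ?_
    rw [← Ioi_insert, nhdsWithin_insert, eventually_sup, eventually_pure]
    exact ⟨(hausdorffMeasureOn_closedBall_zero_le hξ E x).trans
      (le_mul_of_one_le_left zero_le (ENNReal.one_le_coe_iff.2 ht.le)), hx.2⟩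
  have hM : MeasurableSet (toMeasurable ν L) := measurableSet_toMeasurable ν L
  have hνM : ν (toMeasurable ν L)ᶜ = 0 := by
    rw [hν, hausdorffMeasureOn_apply hξ E hM.compl]
    refine hE.HM_eq_zero_of_frequently hξ hη hsep ht hfin hM.compl fun x hx => ?_
    have hxL : x ∉ L := fun h => hx.1 (subset_toMeasurable ν L h)
    exact (not_eventually.1 fun h => hxL ⟨hx.2, h⟩).mono fun r hr => (not_le.1 hr).le
  calc HM μ q ξ E = ν univ := by rw [hν, hausdorffMeasureOn_apply hξ E .univ, univ_inter]
    _ = ν L := by rw [← measure_add_measure_compl hM, hνM, add_zero, measure_toMeasurable]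
    _ ≤ t * WM μ q ξ L := hνL
    _ ≤ t * WM μ q ξ E := by
        gcongr
        exact WM_mono fun x hx => hx.1

lemma HM_le_WM (hE : BallWeightDoublingOn μ q ξ E C η) (hξ : ξ ∅ = 0) (hη : 0 < η) (hC : C ≠ 0)
    (hsep : IsSeparable E) : HM μ q ξ E ≤ WM μ q ξ E := by
  by_cases hW : WM μ q ξ E = ∞
  · exact le_top.trans_eq hW.symm
  have hfin : HM μ q ξ E ≠ ∞ := ne_top_of_le_ne_top (by finiteness) (hE.HM_le_mul_WM hξ hη hC)
  refine ENNReal.le_of_forall_lt_one_mul_le fun s hs => ?_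
  rcases eq_or_ne s 0 with rfl | hs0
  · simp
  lift s to ℝ≥0 using hs.ne_top
  have hs0 : s ≠ 0 := ENNReal.coe_ne_zero.1 hs0
  have ht : 1 < s⁻¹ := (one_lt_inv₀ (pos_iff_ne_zero.2 hs0)).2 (ENNReal.coe_lt_one_iff.1 hs)
  calc s * HM μ q ξ E ≤ s * ((s⁻¹ : ℝ≥0) * WM μ q ξ E) := by
        gcongr
        exact hE.HM_le_mul_WM_of_one_lt hξ hη hsep hfin ht
    _ = WM μ q ξ E := by
        rw [← mul_assoc, ← ENNReal.coe_mul, mul_inv_cancel₀ hs0, ENNReal.coe_one, one_mul]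

end BallWeightDoublingOn

end Density

section Separability

/-! ### Separability and points outside the support -/

variable [MetricSpace X] [MeasurableSpace X] {μ : Measure X} {q : ℝ} {ξ : Set X → ℝ≥0∞}
  {E : Set X}

lemma isSeparable_of_WM_ne_top (h : WM μ q ξ E ≠ ∞) : IsSeparable E := by
  rcases E.eq_empty_or_nonempty with rfl | hE
  · exact countable_empty.isSeparable
  obtain ⟨s, -, hs, hEs⟩ := EMetric.subset_countable_closure_of_almost_dense_set E fun ε hε => by
    obtain ⟨δ, hδ, hδε⟩ := ENNReal.lt_iff_exists_nnreal_btwn.1 hε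
    have hlt : Wd μ q ξ (δ / 2) E < ∞ :=
      (Wd_le_WM (half_pos (NNReal.coe_pos.2 (ENNReal.coe_pos.1 hδ))) subset_rfl).trans_lt h.lt_top
    obtain ⟨w, c, r, hcov, -⟩ := exists_weightedCover_of_Wd_lt hE hlt
    refine ⟨range c, countable_range c, fun y hy => ?_⟩
    obtain ⟨i, hi⟩ := mem_iUnion.1 (hcov.isCenteredCover.2.2 hy)
    have hc : c i ∈ closedBall (c i) (r i) := mem_closedBall_self (dist_nonneg.trans hi)
    have hdist : dist y (c i) ≤ δ := (dist_le_diam_of_mem isBounded_closedBall hi hc).trans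
      ((hcov.2.1 i).trans_eq (mul_div_cancel₀ _ two_ne_zero))
    refine mem_biUnion (mem_range_self i) (mem_closedEBall.2 ?_)
    rw [edist_nndist]
    exact (ENNReal.coe_le_coe.2 hdist).trans hδε.le
  exact ⟨s, hs, hEs⟩

lemma HM_eq_zero_of_frequently_ballWeight_eq_zero (hξ : ξ ∅ = 0) (hE : IsSeparable E)
    (h : ∀ x ∈ E, ∃ᶠ r in nhdsWithin 0 (Ioi 0), ballWeight μ q ξ (closedBall x r) = 0) :
    HM μ q ξ E = 0 := by
  refine nonpos_iff_eq_zero.1 (HM_le_iff.2 fun F hF δ hδ => ?_)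
  have hex : ∀ x ∈ F, ∃ r ∈ Ioc 0 δ, ballWeight μ q ξ (closedBall x r) = 0 := fun x hx => by
    obtain ⟨r, hw, hr⟩ := ((h x (hF hx)).and_eventually (Ioc_mem_nhdsGT hδ)).exists
    exact ⟨r, hr, hw⟩
  choose! r hr hw using hex
  have := (hE.mono hF).secondCountableTopology
  have hLindelof : IsLindelof F := isLindelof_iff_isLindelof_univ.2 isLindelof_univ
  obtain ⟨s, hs, hsF, hcov⟩ := hLindelof.elim_nhds_subcover (fun x => closedBall x (r x))
    fun x hx => closedBall_mem_nhds x (hr x hx).1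
  have := hs.to_subtype
  calc Hd μ q ξ δ F ≤ ∑' x : s, ballWeight μ q ξ (closedBall (x : X) (r x)) :=
        Hd_le_tsum hξ hδ.le (fun x => hsF x x.2)
          (fun x => (diam_closedBall (hr x (hsF x x.2)).1.le).trans
            (by linarith [(hr x (hsF x x.2)).2]))
          (hcov.trans_eq (biUnion_eq_iUnion _ _))
    _ ≤ 0 := (ENNReal.tsum_eq_zero.2 fun x : s => hw x (hsF x x.2)).le

lemma HM_eq_zero_of_disjoint_measSupport (hξ : ξ ∅ = 0) (hq : 0 < q) (hE : IsSeparable E)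
    (hdisj : Disjoint E (measSupport μ)) : HM μ q ξ E = 0 := by
  refine HM_eq_zero_of_frequently_ballWeight_eq_zero hξ hE fun x hx => ?_
  have hx' : ∃ r, 0 < r ∧ μ (ball x r) = 0 := by
    simpa [measSupport] using disjoint_left.1 hdisj hx
  obtain ⟨r, hr, h0⟩ := hx'
  refine Eventually.frequently ?_
  filter_upwards [Ioo_mem_nhdsGT hr] with s hs
  exact ballWeight_eq_zero_of_measure_eq_zero hq
    (measure_mono_null (closedBall_subset_ball hs.2) h0)

end Separability

section Blanketed

/-! ### Blanketed measures and premeasures -/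

lemma epow_antitone {q : ℝ} (hq : q ≤ 0) : Antitone (epow · q) := by
  intro x y hxy
  by_cases hx : x = 0
  · exact le_top.trans_eq (if_pos ⟨hx, hq⟩).symm
  · have hy : y ≠ 0 := fun h => hx (nonpos_iff_eq_zero.1 (h ▸ hxy))
    simp only [epow, hx, hy, false_and, if_false]
    rw [← neg_neg q, ENNReal.rpow_neg, ENNReal.rpow_neg x, ENNReal.inv_le_inv]
    exact ENNReal.rpow_le_rpow hxy (neg_nonneg.2 hq)

lemma exists_eventually_forall_le_mul {α : Type*} {S : Set α} {f : α → ℝ → ℝ≥0∞}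
    (hf : ∀ x, Monotone (f x)) {a : ℝ} (ha : 1 < a) {m : ℝ≥0}
    (h : ∀ᶠ r in nhdsWithin 0 (Ioi 0), ∀ x ∈ S, f x (a * r) ≤ m * f x r) (b : ℝ) :
    ∃ D : ℝ≥0, ∀ᶠ r in nhdsWithin 0 (Ioi 0), ∀ x ∈ S, f x (b * r) ≤ D * f x r := by
  have hpow : ∀ k : ℕ, ∀ᶠ r in nhdsWithin 0 (Ioi 0), ∀ x ∈ S,
      f x (a ^ k * r) ≤ (m ^ k : ℝ≥0) * f x r := fun k => by
    induction k with
    | zero => simp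
    | succ k ih =>
      filter_upwards [ih, eventually_nhdsGT_zero_mul_left (by positivity : 0 < a ^ k) h]
        with r hrk hr x hx
      calc f x (a ^ (k + 1) * r) = f x (a * (a ^ k * r)) := by rw [pow_succ', mul_assoc]
        _ ≤ m * ((m ^ k : ℝ≥0) * f x r) := (hr x hx).trans (by gcongr; exact hrk x hx)
        _ = (m ^ (k + 1) : ℝ≥0) * f x r := by rw [pow_succ', ENNReal.coe_mul, mul_assoc]
  obtain ⟨k, hk⟩ := pow_unbounded_of_one_lt b ha
  refine ⟨m ^ k, ?_⟩
  filter_upwards [hpow k, self_mem_nhdsWithin] with r hr hr0 x hx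
  exact (hf x (mul_le_mul_of_nonneg_right hk.le (le_of_lt hr0))).trans (hr x hx)

variable [MetricSpace X] {ξ : Set X → ℝ≥0∞}

lemma PremeasureBlanketed.exists_eventually_le_mul (hξD : PremeasureBlanketed ξ)
    (hξ : IsPremeasure ξ) (b : ℝ) : ∃ K : ℝ≥0, ∀ᶠ r in nhdsWithin 0 (Ioi 0), ∀ x,
      ξ (closedBall x (b * r)) ≤ K * ξ (closedBall x r) := by
  obtain ⟨K, -, hK⟩ := hξD
  have hmono : ∀ x, Monotone fun r => ξ (closedBall x r) := fun x r s hrs =>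
    hξ.2 x r x s (closedBall_subset_closedBall hrs)
  have h := exists_eventually_forall_le_mul (S := univ) hmono one_lt_two (m := K) (by
    filter_upwards [Ioc_mem_nhdsGT one_pos] with r hr x _ using hK x r hr.1 hr.2) b
  simpa using h

variable [MeasurableSpace X] {μ : Measure X} {q : ℝ} {E : Set X}

lemma MeasureBlanketed.exists_eventually_le_mul (hμ : MeasureBlanketed μ) (b : ℝ) :
    ∃ D : ℝ≥0, ∀ᶠ r in nhdsWithin 0 (Ioi 0), ∀ x ∈ measSupport μ,
      μ (closedBall x (b * r)) ≤ D * μ (closedBall x r) := by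
  obtain ⟨a, ha, hlim⟩ := hμ
  obtain ⟨m, hm, hmtop⟩ := exists_between hlim
  lift m to ℝ≥0 using hmtop.ne
  refine exists_eventually_forall_le_mul (m := m) (f := fun x r => μ (closedBall x r))
    (fun x r s hrs => measure_mono (closedBall_subset_closedBall hrs)) ha ?_ b
  filter_upwards [eventually_lt_of_limsup_lt hm, self_mem_nhdsWithin] with r hr hr0 x hx
  have hpos : μ (closedBall x r) ≠ 0 :=
    ((hx r hr0).trans_le (measure_mono ball_subset_closedBall)).ne'
  have hm0 : (m : ℝ≥0∞) ≠ 0 := (zero_le.trans_lt hr).ne'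
  rw [← ENNReal.div_le_iff_le_mul (.inl hpos) (.inr hm0)]
  exact (le_iSup₂ (f := fun x (_ : x ∈ measSupport μ) =>
    μ (closedBall x (a * r)) / μ (closedBall x r)) x hx).trans hr.le

lemma MeasureBlanketed.exists_eventually_epow_le_mul (hμ : MeasureBlanketed μ)
    (hE : q ≤ 0 ∨ E ⊆ measSupport μ) :
    ∃ A : ℝ≥0, ∀ᶠ r in nhdsWithin 0 (Ioi 0), ∀ x ∈ E, ∀ y ∈ closedBall x (5 * r),
      epow (μ (closedBall y (10 * r))) q ≤ A * epow (μ (closedBall x r)) q := by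
  rcases le_or_gt q 0 with hq | hq
  · refine ⟨1, eventually_nhdsWithin_of_forall fun r hr x _ y hy => ?_⟩
    rw [ENNReal.coe_one, one_mul]
    refine epow_antitone hq (measure_mono (closedBall_subset_closedBall' ?_))
    linarith [mem_closedBall'.1 hy, mem_Ioi.1 hr]
  · obtain ⟨D, hD⟩ := hμ.exists_eventually_le_mul 16
    refine ⟨D ^ q, ?_⟩
    filter_upwards [hD, self_mem_nhdsWithin] with r hr hr0 x hx y hy
    have hyx : closedBall y (10 * r) ⊆ closedBall x (16 * r) :=
      closedBall_subset_closedBall' (by linarith [mem_closedBall.1 hy, mem_Ioi.1 hr0])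
    rw [epow_of_pos hq, epow_of_pos hq, ENNReal.coe_rpow_of_nonneg D hq.le,
      ← ENNReal.mul_rpow_of_nonneg _ _ hq.le]
    exact ENNReal.rpow_le_rpow
      ((measure_mono hyx).trans (hr x (hE.resolve_left hq.not_ge hx))) hq.le

lemma exists_ballWeightDoublingOn (hμ : MeasureBlanketed μ) (hξ : IsPremeasure ξ)
    (hξD : PremeasureBlanketed ξ) (hE : q ≤ 0 ∨ E ⊆ measSupport μ) :
    ∃ C : ℝ≥0, C ≠ 0 ∧ ∃ η > 0, BallWeightDoublingOn μ q ξ E C η := by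
  obtain ⟨A, hA⟩ := hμ.exists_eventually_epow_le_mul hE
  obtain ⟨K, hK⟩ := hξD.exists_eventually_le_mul hξ 16
  obtain ⟨η, hη, h⟩ := (nhdsGT_basis_Ioc (0 : ℝ)).eventually_iff.1 (hA.and hK)
  have hC : 1 ≤ max 1 (A * K) := le_max_left _ _
  refine ⟨max 1 (A * K), (one_pos.trans_le hC).ne', η, hη, fun r hr x hx y hy => ?_⟩
  rcases hr.1.eq_or_lt with rfl | hr0
  · obtain rfl : y = x := by simpa using hy
    rw [mul_zero]
    exact le_mul_of_one_le_left zero_le (ENNReal.one_le_coe_iff.2 hC)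
  obtain ⟨hAr, hKr⟩ := h ⟨hr0, hr.2⟩
  have hyx : closedBall y (10 * r) ⊆ closedBall x (16 * r) :=
    closedBall_subset_closedBall' (by linarith [mem_closedBall.1 hy])
  calc ballWeight μ q ξ (closedBall y (10 * r))
      ≤ (A * epow (μ (closedBall x r)) q) * (K * ξ (closedBall x r)) :=
        mul_le_mul' (hAr x hx y hy) ((hξ.2 _ _ _ _ hyx).trans (hKr x))
    _ = (A * K : ℝ≥0) * ballWeight μ q ξ (closedBall x r) := by
        rw [mul_mul_mul_comm, ENNReal.coe_mul, ballWeight]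
    _ ≤ (max 1 (A * K) : ℝ≥0) * ballWeight μ q ξ (closedBall x r) := by
        gcongr
        exact le_max_right _ _

end Blanketed

section Equality

variable [MetricSpace X] [MeasurableSpace X] [BorelSpace X]

lemma HM_le_WM_of_nonpos_or_subset_measSupport {μ : Measure X} {q : ℝ} {ξ : Set X → ℝ≥0∞}
    {E : Set X} (hμ : MeasureBlanketed μ) (hξ : IsPremeasure ξ) (hξD : PremeasureBlanketed ξ)
    (hE : q ≤ 0 ∨ E ⊆ measSupport μ) (hsep : IsSeparable E) : HM μ q ξ E ≤ WM μ q ξ E := by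
  obtain ⟨C, hC, η, hη, hdoubling⟩ := exists_ballWeightDoublingOn hμ hξ hξD hE
  exact hdoubling.HM_le_WM hξ.1 hη hC hsep

theorem stmt1_general (μ : Measure X) (hμ : MeasureBlanketed μ) (q : ℝ) (ξ : Set X → ℝ≥0∞)
    (hξ : IsPremeasure ξ) (hξD : PremeasureBlanketed ξ) (E : Set X) :
    WM μ q ξ E = HM μ q ξ E := by
  refine WM_le_HM.antisymm ?_
  by_cases hW : WM μ q ξ E = ∞
  · exact le_top.trans_eq hW.symm
  have hsep : IsSeparable E := isSeparable_of_WM_ne_top hW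
  rcases le_or_gt q 0 with hq | hq
  · exact HM_le_WM_of_nonpos_or_subset_measSupport hμ hξ hξD (.inl hq) hsep
  let S := measSupport μ
  have hnull : HM μ q ξ (E \ S) = 0 :=
    HM_eq_zero_of_disjoint_measSupport hξ.1 hq (hsep.mono sdiff_subset) disjoint_sdiff_left
  calc HM μ q ξ E ≤ HM μ q ξ (E ∩ S) + HM μ q ξ (E \ S) :=
        measure_le_inter_add_sdiff (hausdorffOuterMeasure μ q ξ hξ.1) E S
    _ = HM μ q ξ (E ∩ S) := by rw [hnull, add_zero]
    _ ≤ WM μ q ξ (E ∩ S) := HM_le_WM_of_nonpos_or_subset_measSupport hμ hξ hξD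
        (.inr inter_subset_right) (hsep.mono inter_subset_left)
    _ ≤ WM μ q ξ E := WM_mono inter_subset_left

end Equality

section Thms

variable [MetricSpace X] [SeparableSpace X] [MeasurableSpace X] [BorelSpace X]
variable [MetricSpace X'] [SeparableSpace X'] [MeasurableSpace X'] [BorelSpace X']

theorem stmt1 (μ : Measure X) [IsProbabilityMeasure μ] (hμ : MeasureBlanketed μ)
    (q : ℝ) (ξ : Set X → ℝ≥0∞) (hξ : IsPremeasure ξ) (hξD : PremeasureBlanketed ξ)
    (E : Set X) :
    WM μ q ξ E = HM μ q ξ E :=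
  stmt1_general μ hμ q ξ hξ hξD E

end Thms
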